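/- Let (X, d) be a metric space, let F : X → 2^X be a multifunction with Fx nonempty and compact for each x ∈ X, let r ≥ 1 be an integer and a, b, c real numbers with 0 < b + c < 1, and suppose that for all x, y ∈ X: min{H(Fx, Fy)^r, d(x, Fx)·d(y, Fy)^{r-1}, d(y, Fy)^r} + a · min{d(x, Fy), d(y, Fx)} ≤ [b · d(x, Fx) + c · d(x, y)] · d(y, Fy)^{r-1}. Let {x_n} be a sequence with x_{n+1} ∈ F x_n and d(x_n, x_{n+1}) = d(x_n, F x_n) for all n, and assume d(x_n, F x_n) > 0 for all n. Then {x_n} is a Cauchy sequence in X. -/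

import Mathlib

open Metric

/-!
Write `p = d(x, Fx)` and `q = d(y, Fy)` for consecutive points `x`, `y` of the orbit. Since
`y ∈ Fx`, the term with coefficient `a` vanishes and `q ≤ H(Fx, Fy)`, so the contractive condition
becomes `min (p * q ^ (r - 1)) (q ^ r) ≤ (b + c) * p * q ^ (r - 1)`. If `q > 0`, cancelling
`q ^ (r - 1)` leaves `min p q ≤ (b + c) * p`; as `b + c < 1`, the minimum is not `p` when `p > 0`,
so `q ≤ (b + c) * p` and the steps of the orbit decay geometrically.
-/

theorem le_mul_of_min_le_mul {R : Type*} [MonoidWithZero R] [LinearOrder R] [MulPosStrictMono R]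
    {p q k : R} (hp : 0 < p) (hk : k < 1) (h : min p q ≤ k * p) : q ≤ k * p :=
  (min_le_iff.1 h).resolve_left (mul_lt_of_lt_one_left hp hk).not_ge

theorem cauchySeq_of_dist_succ_le_mul {X : Type*} [PseudoMetricSpace X] {x : ℕ → X} {k : ℝ}
    (hk0 : 0 ≤ k) (hk1 : k < 1)
    (h : ∀ n, dist (x (n + 1)) (x (n + 1 + 1)) ≤ k * dist (x n) (x (n + 1))) :
    CauchySeq x :=
  cauchySeq_of_le_geometric k (dist (x 0) (x 1)) hk1 fun n =>
    (le_geom (u := fun n => dist (x n) (x (n + 1))) hk0 n fun m _ => h m).trans_eq (mul_comm _ _)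

theorem min_infDist_le_of_contractive {X : Type*} [PseudoMetricSpace X] {A B : Set X} {x y : X}
    {r : ℕ} {a b c : ℝ} (hr : 1 ≤ r) (hAB : hausdorffEDist A B ≠ ⊤) (hyA : y ∈ A)
    (hxy : dist x y = infDist x A) (hy : 0 < infDist y B)
    (h : min (hausdorffDist A B ^ r) (min (infDist x A * infDist y B ^ (r - 1)) (infDist y B ^ r))
      + a * min (infDist x B) (infDist y A)
      ≤ (b * infDist x A + c * dist x y) * infDist y B ^ (r - 1)) :
    min (infDist x A) (infDist y B) ≤ (b + c) * infDist x A := by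
  obtain ⟨s, rfl⟩ := Nat.exists_eq_add_of_le' hr
  rw [Nat.add_sub_cancel] at h
  have le_hausdorff : infDist y B ^ (s + 1) ≤ hausdorffDist A B ^ (s + 1) :=
    pow_le_pow_left₀ hy.le (infDist_le_hausdorffDist_of_mem hyA hAB) _
  have a_term_eq_zero : a * min (infDist x B) (infDist y A) = 0 := by
    rw [infDist_zero_of_mem hyA, min_eq_right infDist_nonneg, mul_zero]
  refine le_of_mul_le_mul_right ?_ (pow_pos hy s)
  calc min (infDist x A) (infDist y B) * infDist y B ^ s
      = min (infDist x A * infDist y B ^ s) (infDist y B ^ (s + 1)) := by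
        rw [min_mul_of_nonneg _ _ (pow_nonneg hy.le s), pow_succ']
    _ = min (hausdorffDist A B ^ (s + 1))
          (min (infDist x A * infDist y B ^ s) (infDist y B ^ (s + 1))) :=
        (min_eq_right ((min_le_right _ _).trans le_hausdorff)).symm
    _ ≤ (b * infDist x A + c * dist x y) * infDist y B ^ s := by
        rwa [a_term_eq_zero, add_zero] at h
    _ = (b + c) * infDist x A * infDist y B ^ s := by rw [hxy, add_mul b c]

theorem stmt_10_general {X : Type*} [MetricSpace X] (F : X → Set X)
    (hfin : ∀ x y, hausdorffEDist (F x) (F y) ≠ ⊤)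
    (r : ℕ) (hr : 1 ≤ r) (a b c : ℝ) (hbc : b + c < 1)
    (h : ∀ x y : X,
      min (hausdorffDist (F x) (F y) ^ r)
        (min (infDist x (F x) * infDist y (F y) ^ (r - 1)) (infDist y (F y) ^ r))
      + a * min (infDist x (F y)) (infDist y (F x))
      ≤ (b * infDist x (F x) + c * dist x y) * infDist y (F y) ^ (r - 1))
    (x : ℕ → X) (hx : ∀ n, x (n + 1) ∈ F (x n))
    (hdx : ∀ n, dist (x n) (x (n + 1)) = infDist (x n) (F (x n))) :
    CauchySeq x := by
  refine cauchySeq_of_dist_succ_le_mul (le_max_right (b + c) 0) (max_lt hbc one_pos) fun n => ?_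
  rw [hdx n, hdx (n + 1)]
  obtain hp | hp := (infDist_nonneg (x := x n) (s := F (x n))).eq_or_lt
  · have stationary : x n = x (n + 1) := eq_of_dist_eq_zero ((hdx n).trans hp.symm)
    rw [← stationary, ← hp, mul_zero]
  obtain hq | hq := (infDist_nonneg (x := x (n + 1)) (s := F (x (n + 1)))).eq_or_lt
  · rw [← hq]
    exact mul_nonneg (le_max_right _ _) hp.le
  calc infDist (x (n + 1)) (F (x (n + 1)))
      ≤ (b + c) * infDist (x n) (F (x n)) := le_mul_of_min_le_mul hp hbc
        (min_infDist_le_of_contractive hr (hfin _ _) (hx n) (hdx n) hq (h _ _))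
    _ ≤ max (b + c) 0 * infDist (x n) (F (x n)) :=
        mul_le_mul_of_nonneg_right (le_max_left _ _) hp.le

/-- In a metric space, if `F` is a multifunction with nonempty compact
values satisfying the contractive inequality with exponent `r ≥ 1` and `0 < b + c < 1`,
and `{x_n}` is an orbit with `x_{n+1} ∈ F x_n`, `d(x_n, x_{n+1}) = d(x_n, F x_n) > 0`,
then `{x_n}` is a Cauchy sequence. -/
theorem stmt_10 {X : Type*} [MetricSpace X]
    (F : X → Set X) (hne : ∀ x, (F x).Nonempty) (hcomp : ∀ x, IsCompact (F x))
    (r : ℕ) (hr : 1 ≤ r) (a b c : ℝ) (hbc0 : 0 < b + c) (hbc1 : b + c < 1)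
    (h : ∀ x y : X,
      min (hausdorffDist (F x) (F y) ^ r)
        (min (infDist x (F x) * infDist y (F y) ^ (r - 1)) (infDist y (F y) ^ r))
      + a * min (infDist x (F y)) (infDist y (F x))
      ≤ (b * infDist x (F x) + c * dist x y) * infDist y (F y) ^ (r - 1))
    (x : ℕ → X) (hx : ∀ n, x (n + 1) ∈ F (x n))
    (hdx : ∀ n, dist (x n) (x (n + 1)) = infDist (x n) (F (x n)))
    (hpos : ∀ n, 0 < infDist (x n) (F (x n))) :
    CauchySeq x :=
  stmt_10_general F (fun _ _ => hausdorffEDist_ne_top_of_nonempty_of_bounded (hne _) (hne _)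
    (hcomp _).isBounded (hcomp _).isBounded) r hr a b c hbc1 h x hx hdx
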